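/- For every K > 0 there exists a constant C > 0 such that for every r₁ ∈ (0, K], ∫_{G \ B_{r₁}} G_{r₁}(x) dρ(x) ≤ C / r₁, where G_{r₁}(x) = sup_{z ∈ B(x, r₁/2)} sup_{t>0} ‖∇p_t(z)‖, ∇p_t = (X₀p_t, X₁p_t, X₂p_t), and ‖·‖ denotes the Euclidean norm of this vector. -/

import Mathlib

open MeasureTheory Real Filter Set
open scoped ENNReal

noncomputable section

/-- The group `G = ℝ² ⋊ ℝ⁺`, realized as triples `(x₁, x₂, a)` (only `a > 0` is relevant). -/
abbrev G : Type := ℝ × ℝ × ℝ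

/-- Group product `(x₁,x₂,a)·(x₁',x₂',a') = (x₁+a x₁', x₂+a x₂', a a')`. -/
def gMul (x y : G) : G := (x.1 + x.2.2 * y.1, x.2.1 + x.2.2 * y.2.1, x.2.2 * y.2.2)

/-- Group inverse `(x₁,x₂,a)⁻¹ = (−x₁/a, −x₂/a, 1/a)`. -/
def gInv (x : G) : G := (-x.1 / x.2.2, -x.2.1 / x.2.2, 1 / x.2.2)

/-- The identity `e = (0,0,1)`. -/
def gE : G := (0, 0, 1)

/-- The right Haar measure `dρ = a⁻¹ dx₁ dx₂ da` (supported where `a > 0`). -/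
def ρG : Measure G :=
  (volume : Measure G).withDensity fun x => ENNReal.ofReal (if 0 < x.2.2 then x.2.2⁻¹ else 0)

/-- The modular function `δ(x₁,x₂,a) = a⁻²`. -/
def deltaG (x : G) : ℝ := (x.2.2 ^ 2)⁻¹

/-- `|x| = √(x₁² + x₂²)`. -/
def normG (x : G) : ℝ := Real.sqrt (x.1 ^ 2 + x.2.1 ^ 2)

/-- `cosh r(x) = (a + a⁻¹ + a⁻¹|x|²)/2`. -/
def coshArg (x : G) : ℝ := (x.2.2 + x.2.2⁻¹ + x.2.2⁻¹ * (x.1 ^ 2 + x.2.1 ^ 2)) / 2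

/-- `r(x) ≥ 0` is determined by `cosh r(x) = coshArg x`; explicitly `r = arcosh (coshArg x)`. -/
def rG (x : G) : ℝ := Real.log (coshArg x + Real.sqrt (coshArg x ^ 2 - 1))

/-- The left-invariant distance `d(x,y) = r(x⁻¹y)`. -/
def dG (x y : G) : ℝ := rG (gMul (gInv x) y)

/-- The heat kernel
`p_t(x) = (8π^{3/2})⁻¹ δ(x)^{1/2} (r(x)/sinh r(x)) t^{−3/2} exp(−r(x)²/(4t))`,
with `r/sinh r := 1` at `x = e`. -/
def heatK (t : ℝ) (x : G) : ℝ :=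
  (8 * Real.pi ^ ((3 : ℝ)/2))⁻¹ * Real.sqrt (deltaG x) *
    (if rG x = 0 then 1 else rG x / Real.sinh (rG x)) *
    t ^ (-(3 : ℝ)/2) * Real.exp (-(rG x ^ 2) / (4 * t))

/-- Convolution `f ∗ p_t(x) = ∫ f(xy⁻¹) p_t(y) dρ(y)`. -/
def convHeat (f : G → ℝ) (t : ℝ) (x : G) : ℝ := ∫ y, f (gMul x (gInv y)) * heatK t y ∂ρG

/-- The heat maximal operator `Mf(x) = sup_{t>0} |f ∗ p_t(x)|` (valued in `ℝ≥0∞`). -/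
def maxHeat (f : G → ℝ) (x : G) : ℝ≥0∞ :=
  ⨆ (t : ℝ) (_ : 0 < t), ENNReal.ofReal |convHeat f t x|

/-- Calderón–Zygmund sets. -/
def IsCZ (R : Set G) : Prop :=
  ∃ c : G, ∃ L r : ℝ, 0 < c.2.2 ∧ 0 < L ∧ 0 < r ∧
    R = Set.Icc (c.1 - L/2) (c.1 + L/2) ×ˢ
        (Set.Icc (c.2.1 - L/2) (c.2.1 + L/2) ×ˢ
         Set.Icc (c.2.2 * Real.exp (-r)) (c.2.2 * Real.exp r)) ∧
    (r < 1 → Real.exp 2 * c.2.2 * r ≤ L ∧ L < Real.exp 8 * c.2.2 * r) ∧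
    (1 ≤ r → c.2.2 * Real.exp (2*r) ≤ L ∧ L < c.2.2 * Real.exp (8*r))

/-- Atoms: `A ∈ L¹(ρ)` supported in a Calderón–Zygmund set `R`, with
`‖A‖_∞ ≤ ρ(R)⁻¹` and `∫ A dρ = 0`. -/
def IsAtomG (A : G → ℝ) : Prop :=
  Integrable A ρG ∧
  ∃ R : Set G, IsCZ R ∧ (∀ x ∉ R, A x = 0) ∧
    eLpNorm A ⊤ ρG ≤ (ρG R)⁻¹ ∧
    ∫ x, A x ∂ρG = 0

/-- `f = Σ_j lam_j A_j` with atoms `A_j`, `Σ_j |lam_j| < ∞`, converging in `L¹(ρ)`. -/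
def IsH1Decomp (f : G → ℝ) (lam : ℕ → ℝ) (A : ℕ → G → ℝ) : Prop :=
  (∀ j, IsAtomG (A j)) ∧ Summable (fun j => |lam j|) ∧
  Tendsto (fun N => eLpNorm (fun x => f x - ∑ j ∈ Finset.range N, lam j * A j x) 1 ρG)
    atTop (nhds 0)

/-- The Hardy space `H¹`. -/
def MemH1 (f : G → ℝ) : Prop :=
  Integrable f ρG ∧ ∃ lam A, IsH1Decomp f lam A

/-- `‖f‖_{H¹} = inf Σ_j |lam_j|` over all atomic decompositions. -/
def H1norm (f : G → ℝ) : ℝ :=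
  sInf {s | ∃ lam A, IsH1Decomp f lam A ∧ s = ∑' j, |lam j|}

/-- The left-invariant vector field `X₀ = a ∂_a`. -/
def X0 (f : G → ℝ) (x : G) : ℝ := x.2.2 * deriv (fun s => f (x.1, x.2.1, s)) x.2.2

/-- The left-invariant vector field `X₁ = a ∂_{x₁}`. -/
def X1 (f : G → ℝ) (x : G) : ℝ := x.2.2 * deriv (fun s => f (s, x.2.1, x.2.2)) x.1

/-- The left-invariant vector field `X₂ = a ∂_{x₂}`. -/
def X2 (f : G → ℝ) (x : G) : ℝ := x.2.2 * deriv (fun s => f (x.1, s, x.2.2)) x.2.1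

/-- `‖∇p_t(x)‖`, the Euclidean norm of `(X₀p_t, X₁p_t, X₂p_t)` at `x`. -/
def gradHeatNorm (t : ℝ) (x : G) : ℝ :=
  Real.sqrt (X0 (heatK t) x ^ 2 + X1 (heatK t) x ^ 2 + X2 (heatK t) x ^ 2)

/-- The Poisson kernel `q_t(x) = π⁻² δ(x)^{1/2} (r(x)/sinh r(x)) · t/(t²+r(x)²)²`. -/
def poissonK (t : ℝ) (x : G) : ℝ :=
  (Real.pi ^ 2)⁻¹ * Real.sqrt (deltaG x) *
    (if rG x = 0 then 1 else rG x / Real.sinh (rG x)) *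
    (t / (t ^ 2 + rG x ^ 2) ^ 2)

/-- Convolution `f ∗ q_t(x) = ∫ f(xy⁻¹) q_t(y) dρ(y)`. -/
def convPoisson (f : G → ℝ) (t : ℝ) (x : G) : ℝ := ∫ y, f (gMul x (gInv y)) * poissonK t y ∂ρG

/-- The Poisson maximal operator `M̃f(x) = sup_{t>0} |f ∗ q_t(x)|`. -/
def maxPoisson (f : G → ℝ) (x : G) : ℝ≥0∞ :=
  ⨆ (t : ℝ) (_ : 0 < t), ENNReal.ofReal |convPoisson f t x|

/-- `G_{r₁}(x) = sup_{z ∈ B(x,r₁/2)} sup_{t>0} ‖∇p_t(z)‖`. -/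
def Gsup (r1 : ℝ) (x : G) : ℝ≥0∞ :=
  ⨆ (z : G) (_ : 0 < z.2.2 ∧ dG x z < r1 / 2) (t : ℝ) (_ : 0 < t),
    ENNReal.ofReal (gradHeatNorm t z)

/-- `R₀ = [−1,1]×[−1,1]×[e⁻¹,e]`. -/
def R0set : Set G :=
  Set.Icc (-1 : ℝ) 1 ×ˢ (Set.Icc (-1 : ℝ) 1 ×ˢ Set.Icc (Real.exp (-1)) (Real.exp 1))

/-- `R_L = [L−1,L+1]×[−1,1]×[e⁻¹,e]`. -/
def RLset (L : ℝ) : Set G :=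
  Set.Icc (L - 1) (L + 1) ×ˢ (Set.Icc (-1 : ℝ) 1 ×ˢ Set.Icc (Real.exp (-1)) (Real.exp 1))

/-- `f_L = χ_{R_L} − χ_{R₀}`. -/
def fL (L : ℝ) : G → ℝ := fun x =>
  (RLset L).indicator (fun _ => (1 : ℝ)) x - R0set.indicator (fun _ => (1 : ℝ)) x

/-- The mean of `g` over `R` with respect to `ρ`. -/
def czMean (g : G → ℝ) (R : Set G) : ℝ := (∫ x in R, g x ∂ρG) / (ρG R).toReal

/-- `‖g‖_{BMO} = sup_R ρ(R)⁻¹ ∫_R |g − g_R| dρ` over Calderón–Zygmund sets `R`. -/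
def czBMO (g : G → ℝ) : ℝ≥0∞ :=
  ⨆ (R : Set G) (_ : IsCZ R),
    (ρG R)⁻¹ * ∫⁻ x in R, ENNReal.ofReal |g x - czMean g R| ∂ρG

/-- `‖h‖_{BMO(ℝ)} = sup_Q |Q|⁻¹ ∫_Q |h − h_Q|` over bounded intervals `Q ⊂ ℝ`. -/
def lineBMO (h : ℝ → ℝ) : ℝ≥0∞ :=
  ⨆ (a : ℝ) (b : ℝ) (_ : a < b),
    (ENNReal.ofReal (b - a))⁻¹ *
      ∫⁻ s in Set.Icc a b, ENNReal.ofReal |h s - (∫ u in Set.Icc a b, h u) / (b - a)|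

/-- `2R₀ = [−2,2]×[−2,2]×[e⁻²,e²]`. -/
def twoR0set : Set G :=
  Set.Icc (-2 : ℝ) 2 ×ˢ (Set.Icc (-2 : ℝ) 2 ×ˢ Set.Icc (Real.exp (-2)) (Real.exp 2))

/-- The set `{x₁ > 3, |x₂| < 1, e⁻¹ < a < e}`. -/
def domSpecial : Set G :=
  {x : G | 3 < x.1 ∧ |x.2.1| < 1 ∧ Real.exp (-1) < x.2.2 ∧ x.2.2 < Real.exp 1}

/-- The function equal to `1/(x₁ (log x₁)^{3/2})` on `{x₁ > 3, |x₂| < 1, e⁻¹ < a < e}`,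
to `c₀` on `R₀`, and `0` elsewhere. -/
def fSpecial (c0 : ℝ) : G → ℝ := fun x =>
  domSpecial.indicator (fun y => (y.1 * Real.log y.1 ^ ((3 : ℝ)/2))⁻¹) x
    + R0set.indicator (fun _ => c0) x


lemma rG_eq (x : G) : rG x = Real.arcosh (coshArg x) := rfl

lemma coshArg_sub_one {x : G} (ha : 0 < x.2.2) :
    2 * x.2.2 * (coshArg x - 1) = (x.2.2 - 1) ^ 2 + x.1 ^ 2 + x.2.1 ^ 2 := by
  unfold coshArg; field_simp; ring

lemma coshArg_quad {x : G} (ha : 0 < x.2.2) :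
    (x.2.2 - coshArg x) ^ 2 + x.1 ^ 2 + x.2.1 ^ 2 = coshArg x ^ 2 - 1 := by
  unfold coshArg; field_simp; ring

lemma one_le_coshArg {x : G} (ha : 0 < x.2.2) : 1 ≤ coshArg x := by
  have h := coshArg_sub_one ha
  by_contra hc
  push Not at hc
  nlinarith [sq_nonneg (x.2.2 - 1), sq_nonneg x.1, sq_nonneg x.2.1]

lemma cosh_rG {x : G} (ha : 0 < x.2.2) : Real.cosh (rG x) = coshArg x :=
  Real.cosh_arcosh (one_le_coshArg ha)

lemma rG_nonneg {x : G} (ha : 0 < x.2.2) : 0 ≤ rG x := Real.arcosh_nonneg (one_le_coshArg ha)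

lemma sinh_rG_sq {x : G} (ha : 0 < x.2.2) : Real.sinh (rG x) ^ 2 = coshArg x ^ 2 - 1 := by
  rw [Real.sinh_sq, cosh_rG ha]

lemma a_le_coshArg {x : G} (ha : 0 < x.2.2) : x.2.2 ≤ 2 * coshArg x := by
  unfold coshArg
  have : 0 < x.2.2⁻¹ := by positivity
  nlinarith [mul_nonneg this.le (add_nonneg (sq_nonneg x.1) (sq_nonneg x.2.1))]

lemma inv_a_le_coshArg {x : G} (ha : 0 < x.2.2) : x.2.2⁻¹ ≤ 2 * coshArg x := by
  unfold coshArg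
  have : 0 < x.2.2⁻¹ := by positivity
  nlinarith [mul_nonneg this.le (add_nonneg (sq_nonneg x.1) (sq_nonneg x.2.1))]

lemma coshArg_gMul {x y : G} (ha : 0 < x.2.2) (hb : 0 < y.2.2) :
    coshArg (gMul x y) = coshArg x * coshArg y -
      (x.2.2 - coshArg x) * (1 / y.2.2 - coshArg y) + (x.1 * y.1 + x.2.1 * y.2.1) / y.2.2 := by
  unfold coshArg gMul; simp only; field_simp; ring

lemma coshArg_gInv {x : G} (ha : 0 < x.2.2) : coshArg (gInv x) = coshArg x := by
  unfold coshArg gInv; simp only; field_simp; ring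

lemma rG_gInv {x : G} (ha : 0 < x.2.2) : rG (gInv x) = rG x := by
  rw [rG_eq, rG_eq, coshArg_gInv ha]

lemma coshArg_gMul_le {x y : G} (ha : 0 < x.2.2) (hb : 0 < y.2.2) :
    coshArg (gMul x y) ≤ Real.cosh (rG x + rG y) := by
  rw [Real.cosh_add, cosh_rG ha, cosh_rG hb, coshArg_gMul ha hb]
  have hx := coshArg_quad ha
  have hy : (1 / y.2.2 - coshArg y) ^ 2 + (y.1 / y.2.2) ^ 2 + (y.2.1 / y.2.2) ^ 2 =
      coshArg y ^ 2 - 1 := by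
    unfold coshArg; field_simp; ring
  have hsx := sinh_rG_sq ha
  have hsy := sinh_rG_sq hb
  have h1 : 0 ≤ Real.sinh (rG x) := Real.sinh_nonneg_iff.2 (rG_nonneg ha)
  have h2 : 0 ≤ Real.sinh (rG y) := Real.sinh_nonneg_iff.2 (rG_nonneg hb)
  have key : -((x.2.2 - coshArg x) * (1 / y.2.2 - coshArg y)) +
      (x.1 * (y.1 / y.2.2) + x.2.1 * (y.2.1 / y.2.2)) ≤ Real.sinh (rG x) * Real.sinh (rG y) := by
    refine (le_abs_self _).trans (abs_le_of_sq_le_sq ?_ (mul_nonneg h1 h2))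
    rw [mul_pow, hsx, hsy, ← hx, ← hy]
    generalize x.2.2 - coshArg x = u
    generalize 1 / y.2.2 - coshArg y = v
    generalize y.1 / y.2.2 = p
    generalize y.2.1 / y.2.2 = q
    nlinarith [sq_nonneg (u * p + x.1 * v), sq_nonneg (u * q + x.2.1 * v),
      sq_nonneg (x.1 * q - x.2.1 * p)]
  have e : (x.1 * y.1 + x.2.1 * y.2.1) / y.2.2 =
      x.1 * (y.1 / y.2.2) + x.2.1 * (y.2.1 / y.2.2) := by field_simp
  rw [e]; linarith

lemma gMul_pos {x y : G} (ha : 0 < x.2.2) (hb : 0 < y.2.2) : 0 < (gMul x y).2.2 :=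
  mul_pos ha hb

lemma gInv_pos {x : G} (ha : 0 < x.2.2) : 0 < (gInv x).2.2 := by
  unfold gInv; simp only; positivity

lemma rG_gMul_le {x y : G} (ha : 0 < x.2.2) (hb : 0 < y.2.2) :
    rG (gMul x y) ≤ rG x + rG y := by
  have h := coshArg_gMul_le ha hb
  rw [← cosh_rG (gMul_pos ha hb), Real.cosh_le_cosh, abs_of_nonneg (rG_nonneg (gMul_pos ha hb)),
    abs_of_nonneg (add_nonneg (rG_nonneg ha) (rG_nonneg hb))] at h
  exact h

lemma coshArg_gMul_le_two {x y : G} (ha : 0 < x.2.2) (hb : 0 < y.2.2) :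
    coshArg (gMul x y) ≤ 2 * coshArg x * coshArg y := by
  refine (coshArg_gMul_le ha hb).trans ?_
  rw [Real.cosh_add, ← cosh_rG ha, ← cosh_rG hb]
  have h1 := (Real.sinh_lt_cosh (rG x)).le
  have h2 := (Real.sinh_lt_cosh (rG y)).le
  have h3 : 0 ≤ Real.sinh (rG x) := Real.sinh_nonneg_iff.2 (rG_nonneg ha)
  have h4 : 0 ≤ Real.sinh (rG y) := Real.sinh_nonneg_iff.2 (rG_nonneg hb)
  nlinarith [mul_le_mul h1 h2 h4 (h3.trans h1)]

/-- Comparison of all relevant quantities at `x` and at a point `z` close to `x`. -/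
lemma compare {K r1 : ℝ} (hK : r1 ≤ K) {x z : G} (ha : 0 < x.2.2) (hz : 0 < z.2.2)
    (hr : r1 ≤ rG x) (h0 : 0 < r1) (hd : dG x z < r1 / 2) :
    rG x / 2 ≤ rG z ∧ coshArg z ≤ 2 * Real.cosh K * coshArg x ∧
    coshArg x ≤ 2 * Real.cosh K * coshArg z ∧ z.2.2 ≤ 2 * Real.cosh K * x.2.2 ∧
    x.2.2 ≤ 2 * Real.cosh K * z.2.2 := by
  set y := gMul (gInv x) z with hy
  have hyp : 0 < y.2.2 := gMul_pos (gInv_pos ha) hz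
  have hry : rG y < r1 / 2 := hd
  have hcy : coshArg y ≤ Real.cosh K := by
    rw [← cosh_rG hyp, Real.cosh_le_cosh, abs_of_nonneg (rG_nonneg hyp), abs_of_pos (by linarith)]
    linarith
  have ez : z = gMul x y := by
    rw [hy]; ext <;> simp [gMul, gInv] <;> field_simp <;> ring
  have ex : x = gMul z (gInv y) := by
    rw [hy]; ext <;> simp [gMul, gInv] <;> field_simp <;> ring
  have e2 : z.2.2 = x.2.2 * y.2.2 := by rw [ez]; rfl
  have t1 : rG x ≤ rG z + rG y := by
    have := rG_gMul_le hz (gInv_pos hyp)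
    rwa [← ex, rG_gInv hyp] at this
  have c1 : coshArg z ≤ 2 * coshArg x * coshArg y := by
    have := coshArg_gMul_le_two ha hyp
    rwa [← ez] at this
  have c2 : coshArg x ≤ 2 * coshArg z * coshArg y := by
    have := coshArg_gMul_le_two hz (gInv_pos hyp)
    rwa [← ex, coshArg_gInv hyp] at this
  have p1 := one_le_coshArg ha
  have p2 := one_le_coshArg hz
  have b1 := a_le_coshArg hyp
  have b2 := inv_a_le_coshArg hyp
  refine ⟨by linarith, by nlinarith, by nlinarith, ?_, ?_⟩
  · rw [e2]; nlinarith
  · have : x.2.2 = z.2.2 * y.2.2⁻¹ := by rw [e2]; field_simp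
    rw [this]; nlinarith

def kC : ℝ := (8 * Real.pi ^ ((3 : ℝ)/2))⁻¹

lemma kC_pos : 0 < kC := by unfold kC; positivity

/-- The time factor of the heat kernel. -/
def wt (t r : ℝ) : ℝ := t ^ (-(3 : ℝ)/2) * Real.exp (-(r ^ 2) / (4 * t))

def Qt (t r : ℝ) : ℝ := r / Real.sinh r * wt t r

lemma wt_pos {t : ℝ} (ht : 0 < t) (r : ℝ) : 0 < wt t r := by unfold wt; positivity

lemma heatK_eq {t : ℝ} {x : G} (ha : 0 < x.2.2) (hc : 1 < coshArg x) :
    heatK t x = kC * x.2.2⁻¹ * Qt t (Real.arcosh (coshArg x)) := by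
  have hr : 0 < rG x := Real.arcosh_pos hc
  have h1 : Real.sqrt (deltaG x) = x.2.2⁻¹ := by
    unfold deltaG
    rw [← inv_pow, Real.sqrt_sq (by positivity)]
  unfold heatK
  rw [h1, if_neg hr.ne', ← rG_eq]
  unfold Qt wt kC
  ring

lemma Qt_hasDerivAt (t : ℝ) {r : ℝ} (hr : 0 < r) :
    HasDerivAt (Qt t) (Qt t r * (1 / r - Real.cosh r / Real.sinh r - r / (2 * t))) r := by
  have hs : 0 < Real.sinh r := Real.sinh_pos_iff.2 hr
  have h1 : HasDerivAt (fun r => r / Real.sinh r) _ r :=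
    (hasDerivAt_id r).div (Real.hasDerivAt_sinh r) hs.ne'
  have h2 : HasDerivAt (fun r : ℝ => Real.exp (-(r ^ 2) / (4 * t)))
      (Real.exp (-(r ^ 2) / (4 * t)) * (-(2 * r) / (4 * t))) r := by
    refine (((hasDerivAt_pow 2 r).neg).div_const (4 * t)).exp.congr_deriv ?_
    simp
  have h3 := h1.mul (h2.const_mul (t ^ (-(3 : ℝ)/2)))
  refine h3.congr_deriv ?_
  unfold Qt wt
  simp only [id]
  by_cases h : t = 0
  · subst h; simp
  field_simp
  ring

lemma heatK_curve {t : ℝ} (γ : ℝ → G) {s0 a' c' : ℝ}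
    (hA : HasDerivAt (fun s => (γ s).2.2) a' s0) (hC : HasDerivAt (fun s => coshArg (γ s)) c' s0)
    (ha : 0 < (γ s0).2.2) (hc : 1 < coshArg (γ s0)) :
    HasDerivAt (fun s => heatK t (γ s)) (heatK t (γ s0) * (-a' / (γ s0).2.2 +
      (1 / rG (γ s0) - coshArg (γ s0) / Real.sinh (rG (γ s0)) - rG (γ s0) / (2 * t)) * c' /
        Real.sinh (rG (γ s0)))) s0 := by
  have hr : 0 < rG (γ s0) := Real.arcosh_pos hc
  have hs : 0 < Real.sinh (rG (γ s0)) := Real.sinh_pos_iff.2 hr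
  have hev : (fun s => heatK t (γ s)) =ᶠ[nhds s0]
      fun s => kC * (γ s).2.2⁻¹ * Qt t (Real.arcosh (coshArg (γ s))) := by
    filter_upwards [hA.continuousAt.eventually (lt_mem_nhds ha),
      hC.continuousAt.eventually (lt_mem_nhds hc)] with s h1 h2
    exact heatK_eq h1 h2
  have hd : HasDerivAt (fun s => Real.arcosh (coshArg (γ s))) _ s0 :=
    HasDerivAt.comp (h₂ := Real.arcosh) s0 (Real.hasDerivAt_arcosh hc) hC
  have hq : HasDerivAt (fun s => Qt t (Real.arcosh (coshArg (γ s)))) _ s0 :=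
    HasDerivAt.comp (h₂ := Qt t) s0 (Qt_hasDerivAt t hr) hd
  have hi : HasDerivAt (fun s => kC * (γ s).2.2⁻¹) _ s0 := (hA.inv ha.ne').const_mul kC
  refine ((hi.mul hq).congr_of_eventuallyEq hev).congr_deriv ?_
  rw [heatK_eq ha hc, ← Real.sinh_arcosh hc.le, ← rG_eq, cosh_rG ha]
  field_simp

lemma coshArg_deriv2 {z : G} (ha : 0 < z.2.2) :
    HasDerivAt (fun s => coshArg (z.1, z.2.1, s)) ((z.2.2 - coshArg z) / z.2.2) z.2.2 := by
  have h := (((hasDerivAt_id z.2.2).add (hasDerivAt_inv ha.ne')).add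
    ((hasDerivAt_inv ha.ne').mul_const (z.1 ^ 2 + z.2.1 ^ 2))).div_const 2
  refine h.congr_deriv ?_
  unfold coshArg
  field_simp
  ring

lemma coshArg_deriv0 {z : G} :
    HasDerivAt (fun s => coshArg (s, z.2.1, z.2.2)) (z.1 / z.2.2) z.1 := by
  have h := ((((hasDerivAt_pow 2 z.1).add_const (z.2.1 ^ 2)).const_mul z.2.2⁻¹).const_add
    (z.2.2 + z.2.2⁻¹)).div_const 2
  refine h.congr_deriv ?_
  simp
  ring

lemma coshArg_deriv1 {z : G} :
    HasDerivAt (fun s => coshArg (z.1, s, z.2.2)) (z.2.1 / z.2.2) z.2.1 := by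
  have h := ((((hasDerivAt_pow 2 z.2.1).const_add (z.1 ^ 2)).const_mul z.2.2⁻¹).const_add
    (z.2.2 + z.2.2⁻¹)).div_const 2
  refine h.congr_deriv ?_
  simp
  ring

lemma X0_eq {t : ℝ} {z : G} (ha : 0 < z.2.2) (hc : 1 < coshArg z) :
    X0 (heatK t) z = heatK t z * (-1 +
      (1 / rG z - coshArg z / Real.sinh (rG z) - rG z / (2 * t)) * (z.2.2 - coshArg z) /
        Real.sinh (rG z)) := by
  have hr : 0 < rG z := Real.arcosh_pos hc
  have hs : 0 < Real.sinh (rG z) := Real.sinh_pos_iff.2 hr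
  have h := heatK_curve (t := t) (fun s => (z.1, z.2.1, s)) (hasDerivAt_id z.2.2)
    (coshArg_deriv2 ha) ha hc
  unfold X0
  rw [h.deriv]
  simp only [Prod.mk.eta]
  field_simp

lemma X1_eq {t : ℝ} {z : G} (ha : 0 < z.2.2) (hc : 1 < coshArg z) :
    X1 (heatK t) z = heatK t z * (
      (1 / rG z - coshArg z / Real.sinh (rG z) - rG z / (2 * t)) * z.1 /
        Real.sinh (rG z)) := by
  have hr : 0 < rG z := Real.arcosh_pos hc
  have hs : 0 < Real.sinh (rG z) := Real.sinh_pos_iff.2 hr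
  have h := heatK_curve (t := t) (fun s => (s, z.2.1, z.2.2)) (hasDerivAt_const z.1 z.2.2)
    (coshArg_deriv0 (z := z)) ha hc
  unfold X1
  rw [h.deriv]
  simp only [Prod.mk.eta]
  field_simp
  ring

lemma X2_eq {t : ℝ} {z : G} (ha : 0 < z.2.2) (hc : 1 < coshArg z) :
    X2 (heatK t) z = heatK t z * (
      (1 / rG z - coshArg z / Real.sinh (rG z) - rG z / (2 * t)) * z.2.1 /
        Real.sinh (rG z)) := by
  have hr : 0 < rG z := Real.arcosh_pos hc
  have hs : 0 < Real.sinh (rG z) := Real.sinh_pos_iff.2 hr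
  have h := heatK_curve (t := t) (fun s => (z.1, s, z.2.2)) (hasDerivAt_const z.2.1 z.2.2)
    (coshArg_deriv1 (z := z)) ha hc
  unfold X2
  rw [h.deriv]
  simp only [Prod.mk.eta]
  field_simp
  ring

lemma tau_bounds {τ : ℝ} (h : 0 ≤ τ) :
    τ ^ 3 ≤ 385 * Real.exp (τ ^ 2 / 4) ∧ τ ^ 5 / 2 ≤ 385 * Real.exp (τ ^ 2 / 4) := by
  have h2 := Real.pow_div_factorial_le_exp (x := τ ^ 2 / 4) (by positivity) 2
  have h3 := Real.pow_div_factorial_le_exp (x := τ ^ 2 / 4) (by positivity) 3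
  have h0 : 1 ≤ Real.exp (τ ^ 2 / 4) := Real.one_le_exp (by positivity)
  norm_num [Nat.factorial] at h2 h3
  have e2 : (τ ^ 2 / 4) ^ 2 / 2 = τ ^ 4 / 32 := by ring
  have e3 : (τ ^ 2 / 4) ^ 3 / 6 = τ ^ 6 / 384 := by ring
  rw [e2] at h2
  rw [e3] at h3
  constructor
  · nlinarith [sq_nonneg (τ - 1), sq_nonneg (τ ^ 2 - τ), sq_nonneg (τ ^ 2)]
  · have : τ ^ 5 ≤ 1 + τ ^ 6 := by
      rcases le_total τ 1 with h' | h'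
      · have := pow_le_one₀ (n := 5) h h'
        nlinarith [pow_nonneg h 6]
      · have := pow_le_pow_right₀ h' (show 5 ≤ 6 by norm_num)
        linarith
    nlinarith [pow_nonneg h 5]

lemma wt_bounds {t r : ℝ} (ht : 0 < t) (hr : 0 < r) :
    wt t r * r ^ 3 ≤ 385 ∧ wt t r * (r / (2 * t)) * r ^ 4 ≤ 385 := by
  obtain ⟨u, hu, rfl⟩ : ∃ u : ℝ, 0 < u ∧ t = u ^ 2 :=
    ⟨Real.sqrt t, Real.sqrt_pos.2 ht, (Real.sq_sqrt ht.le).symm⟩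
  have e1 : (u ^ 2) ^ (-(3 : ℝ)/2) = (u ^ 3)⁻¹ := by
    rw [← Real.rpow_natCast u 2, ← Real.rpow_mul hu.le, ← Real.rpow_natCast u 3,
      ← Real.rpow_neg hu.le]
    norm_num
  have e2 : Real.exp (-(r ^ 2) / (4 * u ^ 2)) = (Real.exp ((r / u) ^ 2 / 4))⁻¹ := by
    rw [← Real.exp_neg]; congr 1; field_simp
  obtain ⟨h1, h2⟩ := tau_bounds (τ := r / u) (by positivity)
  have hE := Real.exp_pos ((r / u) ^ 2 / 4)
  unfold wt
  rw [e1, e2]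
  constructor
  · have : (u ^ 3)⁻¹ * (Real.exp ((r / u) ^ 2 / 4))⁻¹ * r ^ 3 =
      (r / u) ^ 3 / (Real.exp ((r / u) ^ 2 / 4)) := by
      rw [div_pow r u 3]; ring
    rw [this, div_le_iff₀ hE]; exact h1
  · have : (u ^ 3)⁻¹ * (Real.exp ((r / u) ^ 2 / 4))⁻¹ * (r / (2 * u ^ 2)) * r ^ 4 =
      ((r / u) ^ 5 / 2) / (Real.exp ((r / u) ^ 2 / 4)) := by
      rw [div_pow r u 5]; field_simp
    rw [this, div_le_iff₀ hE]; exact h2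

/-- Bound of one component: `p * (E + ...)`. -/
lemma comp_bound {t : ℝ} (ht : 0 < t) {z : G} (ha : 0 < z.2.2) (hc : 1 < coshArg z) {v E : ℝ}
    (hE : 0 ≤ E) (hv : |v| ≤ E + 1 / rG z + rG z / (2 * t)) :
    |heatK t z * v| ≤ kC * 385 * z.2.2⁻¹ * (Real.sinh (rG z))⁻¹ *
      ((rG z ^ 2)⁻¹ * E + 2 * (rG z ^ 3)⁻¹) := by
  have hr : 0 < rG z := Real.arcosh_pos hc
  have hs : 0 < Real.sinh (rG z) := Real.sinh_pos_iff.2 hr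
  have hk := kC_pos
  have hw := wt_pos ht (rG z)
  obtain ⟨h1, h2⟩ := wt_bounds ht hr
  rw [heatK_eq ha hc, ← rG_eq]
  unfold Qt
  set r := rG z
  set w := wt t r
  have h1' : w ≤ 385 * (r ^ 3)⁻¹ := by
    rw [← div_eq_mul_inv, le_div_iff₀ (by positivity)]; exact h1
  have h2' : w * (r / (2 * t)) ≤ 385 * (r ^ 4)⁻¹ := by
    rw [← div_eq_mul_inv, le_div_iff₀ (by positivity)]; exact h2
  rw [abs_mul, abs_of_pos (by positivity)]
  calc kC * z.2.2⁻¹ * (r / Real.sinh r * w) * |v|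
      ≤ kC * z.2.2⁻¹ * (r / Real.sinh r * w) * (E + 1 / r + r / (2 * t)) := by gcongr
    _ = kC * z.2.2⁻¹ * (Real.sinh r)⁻¹ * r * (w * (E + 1 / r) + w * (r / (2 * t))) := by ring
    _ ≤ kC * z.2.2⁻¹ * (Real.sinh r)⁻¹ * r *
        (385 * (r ^ 3)⁻¹ * (E + 1 / r) + 385 * (r ^ 4)⁻¹) := by gcongr
    _ = _ := by field_simp; ring

lemma grad_le {t : ℝ} (ht : 0 < t) {z : G} (ha : 0 < z.2.2) (hc : 1 < coshArg z) :
    gradHeatNorm t z ≤ kC * 385 * z.2.2⁻¹ * (Real.sinh (rG z))⁻¹ *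
      ((rG z ^ 2)⁻¹ * ((|1 - z.2.2 * coshArg z| + coshArg z * |z.1| + coshArg z * |z.2.1|) /
        Real.sinh (rG z) ^ 2) + 6 * (rG z ^ 3)⁻¹) := by
  have hr : 0 < rG z := Real.arcosh_pos hc
  have hs : 0 < Real.sinh (rG z) := Real.sinh_pos_iff.2 hr
  have hk := kC_pos
  have hquad := coshArg_quad ha
  have hss := sinh_rG_sq ha
  have hg : gradHeatNorm t z ≤ |X0 (heatK t) z| + |X1 (heatK t) z| + |X2 (heatK t) z| := by
    unfold gradHeatNorm
    apply Real.sqrt_le_iff.2 ⟨by positivity, ?_⟩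
    rw [← sq_abs (X0 _ z), ← sq_abs (X1 _ z), ← sq_abs (X2 _ z)]
    nlinarith [abs_nonneg (X0 (heatK t) z), abs_nonneg (X1 (heatK t) z),
      abs_nonneg (X2 (heatK t) z),
      mul_nonneg (abs_nonneg (X0 (heatK t) z)) (abs_nonneg (X1 (heatK t) z)),
      mul_nonneg (abs_nonneg (X0 (heatK t) z)) (abs_nonneg (X2 (heatK t) z)),
      mul_nonneg (abs_nonneg (X1 (heatK t) z)) (abs_nonneg (X2 (heatK t) z))]
  have u0 : |z.2.2 - coshArg z| ≤ Real.sinh (rG z) := abs_le_of_sq_le_sq (by nlinarith) hs.le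
  have u1 : |z.1| ≤ Real.sinh (rG z) := abs_le_of_sq_le_sq (by nlinarith) hs.le
  have u2 : |z.2.1| ≤ Real.sinh (rG z) := abs_le_of_sq_le_sq (by nlinarith) hs.le
  set r := rG z
  set s := Real.sinh r
  set c := coshArg z
  set a := z.2.2
  have gen : ∀ w : ℝ, |w| ≤ s → |(1 / r - r / (2 * t)) * (w / s)| ≤ 1 / r + r / (2 * t) := by
    intro w hw
    rw [abs_mul, abs_div, abs_of_pos hs]
    have h1 : |w| / s ≤ 1 := (div_le_one hs).2 hw
    have h2 : |1 / r - r / (2 * t)| ≤ 1 / r + r / (2 * t) := by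
      have p1 : 0 < 1 / r := by positivity
      have p2 : 0 < r / (2 * t) := by positivity
      rw [abs_le]; constructor <;> linarith
    calc _ ≤ |1 / r - r / (2 * t)| * 1 := by gcongr
      _ ≤ _ := by linarith
  have b0 := comp_bound ht ha hc (E := |1 - a * c| / s ^ 2)
    (v := -1 + (1 / r - c / s - r / (2 * t)) * (a - c) / s) (by positivity) (by
      have : -1 + (1 / r - c / s - r / (2 * t)) * (a - c) / s =
          (1 - a * c) / s ^ 2 + (1 / r - r / (2 * t)) * ((a - c) / s) := by
        have : (1 - a * c) / s ^ 2 = -1 - c * (a - c) / s ^ 2 := by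
          field_simp; rw [hss]; ring
        rw [this]; ring
      rw [this]
      refine (abs_add_le _ _).trans ?_
      have := gen _ u0
      rw [abs_div, abs_of_pos (show 0 < s ^ 2 by positivity)]
      linarith)
  have hcp : 0 < c := by linarith
  have bi : ∀ w : ℝ, |w| ≤ s → |(1 / r - c / s - r / (2 * t)) * w / s| ≤
      c * |w| / s ^ 2 + 1 / r + r / (2 * t) := by
    intro w hw
    have : (1 / r - c / s - r / (2 * t)) * w / s =
        -(c * w / s ^ 2) + (1 / r - r / (2 * t)) * (w / s) := by ring
    rw [this]
    refine (abs_add_le _ _).trans ?_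
    have := gen _ hw
    rw [abs_neg, abs_div, abs_mul, abs_of_pos hcp, abs_of_pos (show 0 < s ^ 2 by positivity)]
    linarith
  have b1 := comp_bound ht ha hc (by positivity) (bi _ u1)
  have b2 := comp_bound ht ha hc (by positivity) (bi _ u2)
  rw [← X0_eq ha hc] at b0
  rw [← X1_eq ha hc] at b1
  rw [← X2_eq ha hc] at b2
  refine hg.trans ((add_le_add (add_le_add b0 b1) b2).trans (le_of_eq ?_))
  ring

lemma grad_near {t M : ℝ} (ht : 0 < t) {z : G} (ha : 0 < z.2.2) (hc : 1 < coshArg z)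
    (hM : coshArg z ≤ M) :
    gradHeatNorm t z ≤ kC * 385 * (20 * M ^ 2) * (rG z ^ 4)⁻¹ := by
  have hr : 0 < rG z := Real.arcosh_pos hc
  have hs : 0 < Real.sinh (rG z) := Real.sinh_pos_iff.2 hr
  have hk := kC_pos
  have hquad := coshArg_quad ha
  have hss := sinh_rG_sq ha
  have u0 : |z.2.2 - coshArg z| ≤ Real.sinh (rG z) := abs_le_of_sq_le_sq (by nlinarith) hs.le
  have u1 : |z.1| ≤ Real.sinh (rG z) := abs_le_of_sq_le_sq (by nlinarith) hs.le
  have u2 : |z.2.1| ≤ Real.sinh (rG z) := abs_le_of_sq_le_sq (by nlinarith) hs.le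
  have rs : rG z ≤ Real.sinh (rG z) := Real.self_le_sinh_iff.2 hr.le
  have sc : Real.sinh (rG z) ≤ coshArg z := by
    rw [← cosh_rG ha]; exact (Real.sinh_lt_cosh _).le
  have ia := (inv_a_le_coshArg ha).trans (mul_le_mul_of_nonneg_left hM (by norm_num))
  refine (grad_le ht ha hc).trans ?_
  set r := rG z
  set s := Real.sinh r
  set c := coshArg z
  set a := z.2.2
  have n0 : |1 - a * c| ≤ s ^ 2 + c * s := by
    have : 1 - a * c = -s ^ 2 + (-(a - c)) * c := by rw [hss]; ring
    rw [this]
    refine (abs_add_le _ _).trans ?_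
    rw [abs_mul, abs_neg, abs_neg, abs_of_pos (show 0 < s ^ 2 by positivity),
      abs_of_pos (show 0 < c by linarith)]
    nlinarith
  have hE : (|1 - a * c| + c * |z.1| + c * |z.2.1|) / s ^ 2 ≤ 4 * M / r := by
    have h1 : |1 - a * c| + c * |z.1| + c * |z.2.1| ≤ 4 * M * s := by nlinarith
    calc _ ≤ 4 * M * s / s ^ 2 := by gcongr
      _ = 4 * M / s := by field_simp
      _ ≤ 4 * M / r := by
        have : 0 < M := by linarith
        gcongr
  have hM1 : 1 ≤ M := by linarith
  calc _ ≤ kC * 385 * (2 * M) * r⁻¹ * ((r ^ 2)⁻¹ * (4 * M / r) + 6 * M * (r ^ 3)⁻¹) := by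
        have h6 : 6 * (r ^ 3)⁻¹ ≤ 6 * M * (r ^ 3)⁻¹ := by
          have : 0 < (r ^ 3)⁻¹ := by positivity
          nlinarith
        gcongr
    _ = _ := by field_simp; ring

set_option maxHeartbeats 1000000 in
lemma grad_far {t : ℝ} (ht : 0 < t) {z : G} (ha : 0 < z.2.2) (hrz : 1 / 2 ≤ rG z) :
    gradHeatNorm t z ≤ kC * 385 * 200 * z.2.2⁻¹ * (coshArg z)⁻¹ *
      ((rG z ^ 3)⁻¹ + (rG z ^ 2)⁻¹ * Real.sqrt (z.2.2 / coshArg z)) := by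
  have hr : 0 < rG z := by linarith
  have hch : 1 + rG z ^ 2 / 2 ≤ coshArg z := by
    rw [← cosh_rG ha]
    have e : rG z = 2 * (rG z / 2) := by ring
    have h1 : Real.cosh (rG z) = 1 + 2 * Real.sinh (rG z / 2) ^ 2 := by
      conv_lhs => rw [e]
      rw [Real.cosh_two_mul, Real.cosh_sq]; ring
    have h2 : rG z / 2 ≤ Real.sinh (rG z / 2) := Real.self_le_sinh_iff.2 (by linarith)
    rw [h1]
    nlinarith
  have hc : 1 < coshArg z := by nlinarith
  have hs : 0 < Real.sinh (rG z) := Real.sinh_pos_iff.2 hr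
  have hk := kC_pos
  have hquad := coshArg_quad ha
  have hss := sinh_rG_sq ha
  have rc : rG z ≤ coshArg z := by nlinarith [sq_nonneg (rG z - 1)]
  have hac := a_le_coshArg ha
  refine (grad_le ht ha hc).trans ?_
  set r := rG z
  set s := Real.sinh r
  set c := coshArg z
  set a := z.2.2
  have hcp : 0 < c := by linarith
  have c98 : 9 / 8 ≤ c := by nlinarith
  have sc : c / 3 ≤ s := by
    refine (le_abs_self _).trans (abs_le_of_sq_le_sq ?_ hs.le); nlinarith
  set q := Real.sqrt (a / c)
  have hq0 : 0 ≤ q := Real.sqrt_nonneg _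
  have hq : q ^ 2 * c = a := by
    rw [Real.sq_sqrt (by positivity)]; field_simp
  have x1 : |z.1| ≤ 3 / 2 * (q * c) := by
    apply abs_le_of_sq_le_sq _ (by positivity)
    have : (3 / 2 * (q * c)) ^ 2 = 9 / 4 * (a * c) := by rw [← hq]; ring
    rw [this]; nlinarith [sq_nonneg z.2.1, mul_pos ha hcp]
  have x2 : |z.2.1| ≤ 3 / 2 * (q * c) := by
    apply abs_le_of_sq_le_sq _ (by positivity)
    have : (3 / 2 * (q * c)) ^ 2 = 9 / 4 * (a * c) := by rw [← hq]; ring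
    rw [this]; nlinarith [sq_nonneg z.1, mul_pos ha hcp]
  have x0 : a ≤ 3 / 2 * (q * c) := by
    refine (le_abs_self _).trans (abs_le_of_sq_le_sq ?_ (by positivity))
    have : (3 / 2 * (q * c)) ^ 2 = 9 / 4 * (a * c) := by rw [← hq]; ring
    rw [this]; nlinarith [mul_pos ha hcp]
  have hE : (|1 - a * c| + c * |z.1| + c * |z.2.1|) / s ^ 2 ≤ 9 / r + 81 / 2 * q := by
    have h0 : |1 - a * c| ≤ 1 + a * c := by
      have := mul_pos ha hcp
      rw [abs_le]; constructor <;> linarith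
    have h1 : |1 - a * c| + c * |z.1| + c * |z.2.1| ≤ 1 + 9 / 2 * (q * c ^ 2) := by nlinarith
    have h2 : c ^ 2 / 9 ≤ s ^ 2 := by nlinarith
    calc _ ≤ (1 + 9 / 2 * (q * c ^ 2)) / (c ^ 2 / 9) := by gcongr
      _ = 9 / c ^ 2 + 81 / 2 * q := by field_simp; ring
      _ ≤ _ := by
        have : r ≤ c ^ 2 := by nlinarith
        gcongr
  have hsi : s⁻¹ ≤ 3 * c⁻¹ := by
    have : s⁻¹ ≤ (c / 3)⁻¹ := by gcongr
    refine this.trans (le_of_eq ?_); field_simp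
  calc _ ≤ kC * 385 * a⁻¹ * (3 * c⁻¹) * ((r ^ 2)⁻¹ * (9 / r + 81 / 2 * q) + 6 * (r ^ 3)⁻¹) := by
        gcongr
    _ = kC * 385 * a⁻¹ * c⁻¹ * (45 * (r ^ 3)⁻¹ + 243 / 2 * ((r ^ 2)⁻¹ * q)) := by
        ring
    _ ≤ kC * 385 * a⁻¹ * c⁻¹ * (200 * (r ^ 3)⁻¹ + 200 * ((r ^ 2)⁻¹ * q)) := by
        have p1 : 0 < (r ^ 3)⁻¹ := by positivity
        have p2 : 0 ≤ (r ^ 2)⁻¹ * q := by positivity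
        exact mul_le_mul_of_nonneg_left (by linarith) (by positivity)
    _ = _ := by ring

def ellG (x : G) : ℝ := 1 + Real.log (coshArg x)

def F1 (r1 : ℝ) (x : G) : ℝ := x.2.2 * ((r1 + ‖x - gE‖) ^ 4)⁻¹

def F2 (x : G) : ℝ := x.2.2⁻¹ * ((coshArg x)⁻¹ *
  ((ellG x ^ 3)⁻¹ + (ellG x ^ 2)⁻¹ * Real.sqrt (x.2.2 / coshArg x)))

lemma F1_nonneg {r1 : ℝ} (h : 0 < r1) {x : G} (ha : 0 < x.2.2) : 0 ≤ F1 r1 x := by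
  unfold F1; positivity

lemma one_le_ellG {x : G} (ha : 0 < x.2.2) : 1 ≤ ellG x := by
  have := Real.log_nonneg (one_le_coshArg ha)
  unfold ellG; linarith

lemma F2_nonneg {x : G} (ha : 0 < x.2.2) : 0 ≤ F2 x := by
  have h1 := one_le_ellG ha
  have h2 := one_le_coshArg ha
  have : 0 < ellG x := by linarith
  have : 0 < coshArg x := by linarith
  unfold F2; positivity

lemma cosh_sub_one_le {r : ℝ} (h0 : 0 ≤ r) (h1 : r ≤ 1) : Real.cosh r - 1 ≤ r ^ 2 := by
  have h := Real.cosh_le_exp_half_sq r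
  have h2 : |r ^ 2 / 2| ≤ 1 := by rw [abs_of_nonneg (by positivity)]; nlinarith
  have h3 := Real.abs_exp_sub_one_le h2
  rw [abs_of_nonneg (show 0 ≤ r ^ 2 / 2 by positivity)] at h3
  have := le_abs_self (Real.exp (r ^ 2 / 2) - 1)
  linarith

lemma norm_near {x : G} (ha : 0 < x.2.2) (h : rG x ≤ 1) :
    ‖x - gE‖ ≤ 3 * rG x ∧ coshArg x ≤ 2 := by
  have h0 := rG_nonneg ha
  have hc := cosh_sub_one_le h0 h
  rw [cosh_rG ha] at hc
  have hc2 : coshArg x ≤ 2 := by nlinarith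
  have e := coshArg_sub_one ha
  have hA := a_le_coshArg ha
  have hq : (x.2.2 - 1) ^ 2 + x.1 ^ 2 + x.2.1 ^ 2 ≤ 8 * rG x ^ 2 := by
    rw [← e]
    have h1 := one_le_coshArg ha
    nlinarith [sq_nonneg (rG x)]
  refine ⟨?_, hc2⟩
  have p : 0 ≤ 3 * rG x := by linarith
  simp only [Prod.norm_def, gE, Prod.fst_sub, Prod.snd_sub, sub_zero, Real.norm_eq_abs]
  refine max_le ?_ (max_le ?_ ?_)
  · exact abs_le_of_sq_le_sq (by nlinarith [sq_nonneg (x.2.2 - 1), sq_nonneg x.2.1]) p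
  · exact abs_le_of_sq_le_sq (by nlinarith [sq_nonneg (x.2.2 - 1), sq_nonneg x.1]) p
  · exact abs_le_of_sq_le_sq (by nlinarith [sq_nonneg x.1, sq_nonneg x.2.1]) p

def C1 (K : ℝ) : ℝ := kC * 385 * (20 * (4 * Real.cosh K) ^ 2) * (16 * 256 * 4)

def C2 (K : ℝ) : ℝ := kC * 385 * 200 * (2 * Real.cosh K) ^ 3 * 64

lemma C1_pos (K : ℝ) : 0 < C1 K := by
  have := kC_pos
  have := Real.cosh_pos K
  unfold C1; positivity

lemma C2_pos (K : ℝ) : 0 < C2 K := by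
  have := kC_pos
  have := Real.cosh_pos K
  unfold C2; positivity

lemma Gsup_near {K r1 : ℝ} (h0 : 0 < r1) (hK : r1 ≤ K) {x : G} (ha : 0 < x.2.2) (hr : r1 ≤ rG x)
    (h1 : rG x ≤ 1) : Gsup r1 x ≤ ENNReal.ofReal (C1 K * F1 r1 x) := by
  unfold Gsup
  refine iSup₂_le fun z hz => iSup₂_le fun t ht => ENNReal.ofReal_le_ofReal ?_
  obtain ⟨hz0, hd⟩ := hz
  obtain ⟨k1, k2, k3, k4, k5⟩ := compare hK ha hz0 hr h0 hd
  obtain ⟨n1, n2⟩ := norm_near ha h1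
  have hrx : 0 < rG x := by linarith
  have hrz : 0 < rG z := by linarith
  have hcz : 1 < coshArg z := by
    rw [← cosh_rG hz0]; exact Real.one_lt_cosh.2 hrz.ne'
  have hch := Real.cosh_pos K
  have hM : coshArg z ≤ 4 * Real.cosh K := by nlinarith
  have hk := kC_pos
  refine (grad_near ht hz0 hcz hM).trans ?_
  unfold C1 F1
  have e1 : (rG z ^ 4)⁻¹ ≤ 16 * (rG x ^ 4)⁻¹ := by
    have : (rG z ^ 4)⁻¹ ≤ ((rG x / 2) ^ 4)⁻¹ := by gcongr
    refine this.trans (le_of_eq ?_); field_simp; norm_num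
  have e2 : (rG x ^ 4)⁻¹ ≤ 256 * ((r1 + ‖x - gE‖) ^ 4)⁻¹ := by
    have h4 : (r1 + ‖x - gE‖) / 4 ≤ rG x := by linarith
    have hp : 0 < r1 + ‖x - gE‖ := by positivity
    have : (rG x ^ 4)⁻¹ ≤ (((r1 + ‖x - gE‖) / 4) ^ 4)⁻¹ := by gcongr
    refine this.trans (le_of_eq ?_); field_simp; norm_num
  have e3 : 1 ≤ 4 * x.2.2 := by
    have h5 := inv_a_le_coshArg ha
    have h6 : x.2.2⁻¹ ≤ 4 := by linarith
    have := mul_le_mul_of_nonneg_right h6 ha.le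
    rwa [inv_mul_cancel₀ ha.ne'] at this
  have hp : 0 < ((r1 + ‖x - gE‖) ^ 4)⁻¹ := by positivity
  calc _ ≤ kC * 385 * (20 * (4 * Real.cosh K) ^ 2) *
        (16 * (256 * ((r1 + ‖x - gE‖) ^ 4)⁻¹) * (4 * x.2.2)) := by
        refine mul_le_mul_of_nonneg_left ?_ (by positivity)
        nlinarith
    _ = _ := by ring

lemma Gsup_far {K r1 : ℝ} (h0 : 0 < r1) (hK : r1 ≤ K) {x : G} (ha : 0 < x.2.2) (hr : r1 ≤ rG x)
    (h1 : 1 ≤ rG x) : Gsup r1 x ≤ ENNReal.ofReal (C2 K * F2 x) := by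
  unfold Gsup
  refine iSup₂_le fun z hz => iSup₂_le fun t ht => ENNReal.ofReal_le_ofReal ?_
  obtain ⟨hz0, hd⟩ := hz
  obtain ⟨k1, k2, k3, k4, k5⟩ := compare hK ha hz0 hr h0 hd
  have hrx : 0 < rG x := by linarith
  have hrz : 1 / 2 ≤ rG z := by linarith
  have hk := kC_pos
  have hch := Real.cosh_pos K
  have hcx : 0 < coshArg x := by linarith [one_le_coshArg ha]
  have hcz : 0 < coshArg z := by linarith [one_le_coshArg hz0]
  refine (grad_far ht hz0 hrz).trans ?_
  have hl := one_le_ellG ha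
  have hlr : ellG x / 4 ≤ rG z := by
    have : Real.log (coshArg x) ≤ rG x := by
      rw [Real.log_le_iff_le_exp hcx, ← cosh_rG ha, Real.cosh_eq]
      have : Real.exp (-rG x) ≤ Real.exp (rG x) := Real.exp_le_exp.2 (by linarith)
      linarith
    unfold ellG; linarith
  unfold C2 F2
  set M := 2 * Real.cosh K
  have hMp : 0 < M := by positivity
  have hM1 : 1 ≤ M := by
    have := Real.one_le_cosh K
    simp only [M]; linarith
  set l := ellG x
  have hlp : 0 < l := by linarith
  set cx := coshArg x
  set cz := coshArg z
  set ax := x.2.2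
  set az := z.2.2
  set r := rG z
  have f1 : az⁻¹ ≤ M * ax⁻¹ := by
    rw [← div_eq_mul_inv, inv_le_comm₀ hz0 (by positivity), inv_div, div_le_iff₀ hMp]; linarith
  have f2 : cz⁻¹ ≤ M * cx⁻¹ := by
    rw [← div_eq_mul_inv, inv_le_comm₀ hcz (by positivity), inv_div, div_le_iff₀ hMp]; linarith
  have f3 : Real.sqrt (az / cz) ≤ M * Real.sqrt (ax / cx) := by
    rw [← Real.sqrt_sq hMp.le, ← Real.sqrt_mul (by positivity)]
    apply Real.sqrt_le_sqrt
    calc az / cz = az * cz⁻¹ := by ring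
      _ ≤ (M * ax) * (M * cx⁻¹) := by gcongr
      _ = _ := by ring
  have f4 : (r ^ 3)⁻¹ ≤ 64 * (l ^ 3)⁻¹ := by
    have : (r ^ 3)⁻¹ ≤ ((l / 4) ^ 3)⁻¹ := by gcongr
    refine this.trans (le_of_eq ?_); field_simp; norm_num
  have f5 : (r ^ 2)⁻¹ ≤ 64 * (l ^ 2)⁻¹ := by
    have : (r ^ 2)⁻¹ ≤ ((l / 4) ^ 2)⁻¹ := by gcongr
    have e : ((l / 4) ^ 2)⁻¹ = 16 * (l ^ 2)⁻¹ := by field_simp; norm_num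
    have : 0 < (l ^ 2)⁻¹ := by positivity
    linarith
  have f6 : 64 * (l ^ 3)⁻¹ ≤ M * (64 * (l ^ 3)⁻¹) := le_mul_of_one_le_left (by positivity) hM1
  have hrp : 0 < r := by linarith
  calc _ ≤ kC * 385 * 200 * (M * ax⁻¹) * (M * cx⁻¹) *
        (M * (64 * (l ^ 3)⁻¹) + (64 * (l ^ 2)⁻¹) * (M * Real.sqrt (ax / cx))) := by
        have g1 := f4.trans f6
        gcongr
    _ = _ := by ring

lemma Gsup_le {K r1 : ℝ} (h0 : 0 < r1) (hK : r1 ≤ K) {x : G} (ha : 0 < x.2.2) (hr : r1 ≤ rG x) :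
    Gsup r1 x ≤ ENNReal.ofReal (C1 K * F1 r1 x) + ENNReal.ofReal (C2 K * F2 x) := by
  rcases le_total (rG x) 1 with h | h
  · exact (Gsup_near h0 hK ha hr h).trans le_self_add
  · exact (Gsup_far h0 hK ha hr h).trans le_add_self

lemma haar2 : (volume : Measure (ℝ × ℝ)).IsAddHaarMeasure :=
  inferInstanceAs ((volume : Measure ℝ).prod (volume : Measure ℝ)).IsAddHaarMeasure

lemma haarG : (volume : Measure G).IsAddHaarMeasure := by
  haveI := haar2
  exact inferInstanceAs ((volume : Measure ℝ).prod (volume : Measure (ℝ × ℝ))).IsAddHaarMeasure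

lemma near_scaled {r1 : ℝ} (h : 0 < r1) :
    ∫⁻ x : G, ENNReal.ofReal (((r1 + ‖x - gE‖) ^ 4)⁻¹) =
      ENNReal.ofReal r1⁻¹ * ∫⁻ x : G, ENNReal.ofReal (((1 + ‖x‖) ^ 4)⁻¹) := by
  haveI := haarG
  rw [lintegral_sub_right_eq_self (fun x : G => ENNReal.ofReal (((r1 + ‖x‖) ^ 4)⁻¹)) gE]
  have hg : Measurable fun x : G => ENNReal.ofReal (((1 + ‖x‖) ^ 4)⁻¹) := by fun_prop
  have hmap := Measure.map_addHaar_smul (volume : Measure G) (r := r1⁻¹) (by positivity)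
  have h1 : ∫⁻ x : G, ENNReal.ofReal (((1 + ‖r1⁻¹ • x‖) ^ 4)⁻¹) =
      ENNReal.ofReal (r1 ^ 3) * ∫⁻ x : G, ENNReal.ofReal (((1 + ‖x‖) ^ 4)⁻¹) := by
    have := lintegral_map (μ := (volume : Measure G)) hg
      (measurable_const_smul (r1⁻¹) : Measurable fun x : G => r1⁻¹ • x)
    rw [← this, hmap, lintegral_smul_measure, smul_eq_mul]
    congr 2
    have hf : Module.finrank ℝ G = 3 := by simp [G]
    rw [hf, inv_pow, inv_inv, abs_of_pos (by positivity)]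
  have h2 : ∀ x : G, ENNReal.ofReal (((r1 + ‖x‖) ^ 4)⁻¹) =
      ENNReal.ofReal ((r1 ^ 4)⁻¹) * ENNReal.ofReal (((1 + ‖r1⁻¹ • x‖) ^ 4)⁻¹) := by
    intro x
    rw [← ENNReal.ofReal_mul (by positivity), ← mul_inv, ← mul_pow, norm_smul, Real.norm_eq_abs,
      abs_of_pos (by positivity), mul_add, mul_inv_cancel_left₀ h.ne', mul_one]
  simp_rw [h2]
  rw [lintegral_const_mul _ (by fun_prop), h1, ← mul_assoc, ← ENNReal.ofReal_mul (by positivity)]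
  congr 2
  field_simp

lemma near_finite : ∫⁻ x : G, ENNReal.ofReal (((1 + ‖x‖) ^ 4)⁻¹) < ∞ := by
  haveI := haarG
  have hf : Module.finrank ℝ G = 3 := by simp [G]
  have h := finite_integral_one_add_norm (E := G) (μ := volume) (r := 4) (by rw [hf]; norm_num)
  refine lt_of_le_of_lt (le_of_eq (lintegral_congr fun x => ?_)) h
  congr 1
  rw [Real.rpow_neg (by positivity)]
  norm_cast

lemma polar_radial (g : ℝ → ℝ≥0∞) (hg : Measurable g) :
    ∫⁻ p : ℝ × ℝ, g (p.1 ^ 2 + p.2 ^ 2) =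
      ENNReal.ofReal (2 * Real.pi) * ∫⁻ ρ in Ioi (0 : ℝ), ENNReal.ofReal ρ * g (ρ ^ 2) := by
  rw [← lintegral_comp_polarCoord_symm]
  have e : ∀ p : ℝ × ℝ, ENNReal.ofReal p.1 • g ((polarCoord.symm p).1 ^ 2 +
      (polarCoord.symm p).2 ^ 2) = ENNReal.ofReal p.1 * g (p.1 ^ 2) := by
    intro p
    rw [smul_eq_mul, polarCoord_symm_apply]
    congr 2
    have := Real.sin_sq_add_cos_sq p.2
    simp only
    linear_combination p.1 ^ 2 * this
  simp_rw [e]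
  rw [polarCoord_target, Measure.volume_eq_prod, ← Measure.prod_restrict,
    lintegral_prod _ (by fun_prop)]
  simp only [lintegral_const, Measure.restrict_apply MeasurableSet.univ, univ_inter,
    Real.volume_Ioo]
  rw [lintegral_mul_const _ (by fun_prop), mul_comm]
  congr 2
  ring

lemma rad_int {a : ℝ} (ha : 0 < a) :
    ∫⁻ ρ in Ioi (0 : ℝ), ENNReal.ofReal (ρ * ((coshArg (ρ, 0, a))⁻¹ *
      ((ellG (ρ, 0, a) ^ 3)⁻¹ + (ellG (ρ, 0, a) ^ 2)⁻¹ *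
        Real.sqrt (a / coshArg (ρ, 0, a))))) ≤
      ENNReal.ofReal (4 * a * (ellG (0, 0, a) ^ 2)⁻¹) := by
  set c : ℝ → ℝ := fun ρ => coshArg (ρ, 0, a) with hcdef
  set l : ℝ → ℝ := fun ρ => ellG (ρ, 0, a) with hldef
  have hc1 : ∀ ρ, 1 ≤ c ρ := fun ρ => one_le_coshArg (x := (ρ, 0, a)) ha
  have hcp : ∀ ρ, 0 < c ρ := fun ρ => by linarith [hc1 ρ]
  have hl1 : ∀ ρ, 1 ≤ l ρ := fun ρ => one_le_ellG (x := (ρ, 0, a)) ha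
  have hlp : ∀ ρ, 0 < l ρ := fun ρ => by linarith [hl1 ρ]
  have hcmono : ∀ ρ, c 0 ≤ c ρ := by
    intro ρ
    simp only [hcdef, coshArg]
    have : 0 ≤ a⁻¹ * ρ ^ 2 := by positivity
    nlinarith
  have hlmono : ∀ ρ, l 0 ≤ l ρ := by
    intro ρ
    have := Real.log_le_log (hcp 0) (hcmono ρ)
    simp only [hldef, ellG]
    linarith
  have dc : ∀ ρ, HasDerivAt c (ρ / a) ρ := fun ρ => coshArg_deriv0 (z := (ρ, 0, a))
  have dl : ∀ ρ, HasDerivAt l (ρ / a / c ρ) ρ := fun ρ => ((dc ρ).log (hcp ρ).ne').const_add 1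
  set L := (l 0 ^ 2)⁻¹ with hL
  have hLp : 0 < L := by have := hlp 0; positivity
  set Φ : ℝ → ℝ := fun ρ => -(a / 2) * (l ρ ^ 2)⁻¹ - 2 * a * L * Real.sqrt (a / c ρ) with hΦ
  set φ : ℝ → ℝ := fun ρ => ρ * ((c ρ)⁻¹ * ((l ρ ^ 3)⁻¹ + L * Real.sqrt (a / c ρ))) with hφ
  have dΦ : ∀ ρ, HasDerivAt Φ (φ ρ) ρ := by
    intro ρ
    have hp := hcp ρ
    have hq := hlp ρ
    have hac : 0 < a / c ρ := by positivity
    have hsq : 0 < Real.sqrt (a / c ρ) := Real.sqrt_pos.2 hac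
    have d1 := ((((dl ρ).pow 2).inv (pow_ne_zero 2 hq.ne')).const_mul (-(a / 2)))
    have d2 := (((hasDerivAt_const ρ a).div (dc ρ) hp.ne').sqrt hac.ne').const_mul (2 * a * L)
    refine (d1.sub d2).congr_deriv ?_
    have hss : Real.sqrt (a / c ρ) * Real.sqrt (a / c ρ) = a / c ρ := Real.mul_self_sqrt hac.le
    have hsi : (a / c ρ) / Real.sqrt (a / c ρ) = Real.sqrt (a / c ρ) := by
      rw [div_eq_iff hsq.ne', hss]
    simp only [hφ]
    have e2 : 2 * a * L * ((0 * c ρ - a * (ρ / a)) / c ρ ^ 2 / (2 * Real.sqrt (a / c ρ))) =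
        -(L * ρ * (c ρ)⁻¹ * ((a / c ρ) / Real.sqrt (a / c ρ))) := by
      field_simp; ring
    have e1 : -(a / 2) * (-((2 : ℕ) * l ρ ^ (2 - 1) * (ρ / a / c ρ)) / (l ρ ^ 2) ^ 2) =
        ρ * (c ρ)⁻¹ * (l ρ ^ 3)⁻¹ := by
      push_cast
      simp only [Nat.add_one_sub_one, pow_one]
      field_simp
    have e1' := e1
    simp only [Pi.div_apply, Pi.pow_apply] at *
    rw [e1, e2, hsi]
    ring
  have hctop : Tendsto c atTop atTop := by
    have : Tendsto (fun ρ : ℝ => (a + a⁻¹) / 2 + a⁻¹ / 2 * ρ ^ 2) atTop atTop :=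
      tendsto_atTop_add_const_left _ _
        ((tendsto_pow_atTop two_ne_zero).const_mul_atTop (by positivity))
    refine this.congr fun ρ => ?_
    simp only [hcdef, coshArg]; ring
  have hltop : Tendsto l atTop atTop :=
    tendsto_atTop_add_const_left _ 1 (Real.tendsto_log_atTop.comp hctop)
  have tΦ : Tendsto Φ atTop (nhds 0) := by
    have t1 : Tendsto (fun ρ => (l ρ ^ 2)⁻¹) atTop (nhds 0) :=
      ((tendsto_pow_atTop two_ne_zero).comp hltop).inv_tendsto_atTop
    have t2 : Tendsto (fun ρ => Real.sqrt (a / c ρ)) atTop (nhds 0) := by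
      have := (hctop.const_div_atTop a).sqrt
      simpa using this
    have := (t1.const_mul (-(a / 2))).sub (t2.const_mul (2 * a * L))
    simp only [mul_zero, sub_zero] at this
    exact this
  have hφ0 : ∀ ρ ∈ Ioi (0 : ℝ), 0 ≤ φ ρ := by
    intro ρ hρ
    have hp := hcp ρ
    have hq := hlp ρ
    have : (0 : ℝ) < ρ := hρ
    simp only [hφ]; positivity
  have hIntg := integrableOn_Ioi_deriv_of_nonneg' (fun ρ _ => dΦ ρ) hφ0 tΦ
  have hval := integral_Ioi_of_hasDerivAt_of_nonneg' (fun ρ _ => dΦ ρ) hφ0 tΦ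
  calc _ ≤ ∫⁻ ρ in Ioi (0 : ℝ), ENNReal.ofReal (φ ρ) := by
        refine setLIntegral_mono' measurableSet_Ioi fun ρ hρ => ENNReal.ofReal_le_ofReal ?_
        have hp := hcp ρ
        have hq := hlp ρ
        have hq0 := hlp 0
        have hm := hlmono ρ
        have : (0 : ℝ) < ρ := hρ
        have h2 : (l ρ ^ 2)⁻¹ ≤ L := by rw [hL]; gcongr
        simp only [hφ]
        gcongr
    _ = ENNReal.ofReal (0 - Φ 0) := by
        rw [← hval, ofReal_integral_eq_lintegral_ofReal hIntg]
        exact (ae_restrict_iff' measurableSet_Ioi).2 (ae_of_all _ hφ0)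
    _ ≤ _ := by
        apply ENNReal.ofReal_le_ofReal
        have hs : Real.sqrt (a / c 0) ≤ 3 / 2 := by
          apply Real.sqrt_le_iff.2 ⟨by norm_num, ?_⟩
          have : a ≤ 2 * c 0 := a_le_coshArg (x := (0, 0, a)) ha
          rw [div_le_iff₀ (hcp 0)]
          linarith [hcp 0]
        have : 0 < a * L := by positivity
        simp only [hΦ]
        rw [← hL]
        nlinarith

lemma ell0_bound {a : ℝ} (ha : 0 < a) :
    (ellG (0, 0, a) ^ 2)⁻¹ ≤ 16 * ((1 + |Real.log a|) ^ 2)⁻¹ := by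
  have hl2 : Real.log 2 ≤ 3 / 4 := by linarith [Real.log_two_lt_d9]
  have hc := one_le_coshArg (x := (0, 0, a)) ha
  have h1 : Real.log a ≤ Real.log 2 + Real.log (coshArg (0, 0, a)) := by
    rw [← Real.log_mul (by norm_num) (by linarith)]
    exact Real.log_le_log ha (a_le_coshArg (x := (0, 0, a)) ha)
  have h2 : -Real.log a ≤ Real.log 2 + Real.log (coshArg (0, 0, a)) := by
    rw [← Real.log_mul (by norm_num) (by linarith), ← Real.log_inv]
    exact Real.log_le_log (by positivity) (inv_a_le_coshArg (x := (0, 0, a)) ha)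
  have h3 : |Real.log a| ≤ Real.log 2 + Real.log (coshArg (0, 0, a)) := by
    rw [abs_le]; constructor <;> linarith
  have h4 : (1 + |Real.log a|) / 4 ≤ ellG (0, 0, a) := by
    unfold ellG; linarith [abs_nonneg (Real.log a)]
  have : (ellG (0, 0, a) ^ 2)⁻¹ ≤ (((1 + |Real.log a|) / 4) ^ 2)⁻¹ := by gcongr
  refine this.trans (le_of_eq ?_)
  field_simp; norm_num

lemma outer_finite :
    ∫⁻ a in Ioi (0 : ℝ), ENNReal.ofReal (a⁻¹ * ((1 + |Real.log a|) ^ 2)⁻¹) < ∞ := by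
  have h := finite_integral_one_add_norm (E := ℝ) (μ := volume) (r := 2) (by simp)
  have e := lintegral_image_eq_lintegral_abs_deriv_mul (f := Real.exp) (f' := Real.exp)
    MeasurableSet.univ (fun x _ => (Real.hasDerivAt_exp x).hasDerivWithinAt)
    Real.exp_injective.injOn (fun a => ENNReal.ofReal (a⁻¹ * ((1 + |Real.log a|) ^ 2)⁻¹))
  rw [image_univ, Real.range_exp, Measure.restrict_univ] at e
  rw [e]
  refine lt_of_le_of_lt (le_of_eq (lintegral_congr fun s => ?_)) h
  rw [← ENNReal.ofReal_mul (by positivity)]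
  congr 1
  rw [Real.log_exp, abs_of_pos (Real.exp_pos s), mul_inv_cancel_left₀ (Real.exp_pos s).ne',
    Real.rpow_neg (by positivity), Real.norm_eq_abs]
  norm_cast


lemma meas_coshArg : Measurable coshArg := by
  unfold coshArg; fun_prop

lemma meas_ellG : Measurable ellG := by
  have := meas_coshArg
  unfold ellG; fun_prop

lemma meas_F1 (r1 : ℝ) : Measurable (F1 r1) := by
  unfold F1; fun_prop

lemma meas_F2 : Measurable F2 := by
  have := meas_coshArg
  have := meas_ellG
  unfold F2; fun_prop

lemma meas_dens : Measurable fun x : G => ENNReal.ofReal (if 0 < x.2.2 then x.2.2⁻¹ else 0) := by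
  refine ENNReal.measurable_ofReal.comp (Measurable.ite ?_ (by fun_prop) measurable_const)
  exact measurableSet_lt measurable_const (by fun_prop)

lemma near_bound {r1 : ℝ} (h : 0 < r1) :
    ∫⁻ x, ENNReal.ofReal (F1 r1 x) ∂ρG ≤
      ENNReal.ofReal r1⁻¹ * ∫⁻ x : G, ENNReal.ofReal (((1 + ‖x‖) ^ 4)⁻¹) := by
  have hm := meas_F1 r1
  rw [ρG, lintegral_withDensity_eq_lintegral_mul _ meas_dens (by fun_prop), ← near_scaled h]
  refine lintegral_mono fun x => ?_
  simp only [Pi.mul_apply]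
  split_ifs with ha
  · rw [← ENNReal.ofReal_mul (by positivity)]
    refine le_of_eq ?_
    congr 1
    unfold F1
    rw [inv_mul_cancel_left₀ ha.ne']
  · simp

lemma far_inner {a : ℝ} (ha : 0 < a) :
    ∫⁻ p : ℝ × ℝ, ENNReal.ofReal (a⁻¹) * ENNReal.ofReal (F2 (p.1, p.2, a)) ≤
      ENNReal.ofReal (128 * Real.pi) * ENNReal.ofReal (a⁻¹ * ((1 + |Real.log a|) ^ 2)⁻¹) := by
  set cc : ℝ → ℝ := fun u => (a + a⁻¹ + a⁻¹ * u) / 2 with hcc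
  set g : ℝ → ℝ≥0∞ := fun u => ENNReal.ofReal ((a ^ 2)⁻¹) * ENNReal.ofReal ((cc u)⁻¹ *
    (((1 + Real.log (cc u)) ^ 3)⁻¹ + ((1 + Real.log (cc u)) ^ 2)⁻¹ * Real.sqrt (a / cc u))) with hgdef
  have hg : Measurable g := by
    have : Measurable cc := by fun_prop
    fun_prop
  have e : ∀ p : ℝ × ℝ, ENNReal.ofReal (a⁻¹) * ENNReal.ofReal (F2 (p.1, p.2, a)) =
      g (p.1 ^ 2 + p.2 ^ 2) := by
    intro p
    simp only [hgdef, hcc, F2, ellG, coshArg]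
    rw [← ENNReal.ofReal_mul (by positivity), ← ENNReal.ofReal_mul (by positivity)]
    congr 1
    ring
  simp_rw [e]
  rw [polar_radial g hg]
  have e2 : ∀ ρ ∈ Ioi (0 : ℝ), ENNReal.ofReal ρ * g (ρ ^ 2) = ENNReal.ofReal ((a ^ 2)⁻¹) *
      ENNReal.ofReal (ρ * ((coshArg (ρ, 0, a))⁻¹ *
      ((ellG (ρ, 0, a) ^ 3)⁻¹ + (ellG (ρ, 0, a) ^ 2)⁻¹ *
        Real.sqrt (a / coshArg (ρ, 0, a))))) := by
    intro ρ hρ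
    have hρ' : 0 < ρ := hρ
    simp only [hgdef, hcc, ellG, coshArg]
    rw [ENNReal.ofReal_mul (p := ρ) hρ'.le]
    have : ρ ^ 2 + (0 : ℝ) ^ 2 = ρ ^ 2 := by ring
    rw [this]
    ring
  rw [setLIntegral_congr_fun measurableSet_Ioi e2, lintegral_const_mul' _ _ ENNReal.ofReal_ne_top]
  calc _ ≤ ENNReal.ofReal (2 * Real.pi) * (ENNReal.ofReal ((a ^ 2)⁻¹) *
        ENNReal.ofReal (4 * a * (ellG (0, 0, a) ^ 2)⁻¹)) := by
        gcongr
        exact rad_int ha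
    _ ≤ _ := by
        rw [← ENNReal.ofReal_mul (by positivity), ← ENNReal.ofReal_mul (by positivity),
          ← ENNReal.ofReal_mul (by positivity)]
        refine ENNReal.ofReal_le_ofReal ?_
        have h := ell0_bound ha
        calc 2 * Real.pi * ((a ^ 2)⁻¹ * (4 * a * (ellG (0, 0, a) ^ 2)⁻¹)) ≤
            2 * Real.pi * ((a ^ 2)⁻¹ * (4 * a * (16 * ((1 + |Real.log a|) ^ 2)⁻¹))) := by
              gcongr
          _ = _ := by field_simp; ring

lemma far_finite : ∫⁻ x, ENNReal.ofReal (F2 x) ∂ρG < ∞ := by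
  have hm := meas_F2
  rw [ρG, lintegral_withDensity_eq_lintegral_mul _ meas_dens (by fun_prop)]
  set H : G → ℝ≥0∞ := ((fun x : G => ENNReal.ofReal (if 0 < x.2.2 then x.2.2⁻¹ else 0)) *
    fun x => ENNReal.ofReal (F2 x)) with hH
  have hHm : Measurable H := meas_dens.mul (by fun_prop)
  have mp := volume_preserving_prodAssoc (α₁ := ℝ) (β₁ := ℝ) (γ₁ := ℝ)
  rw [← mp.lintegral_comp hHm, Measure.volume_eq_prod, lintegral_prod_symm
    (fun q : (ℝ × ℝ) × ℝ => H (MeasurableEquiv.prodAssoc q))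
    (hHm.comp MeasurableEquiv.prodAssoc.measurable).aemeasurable]
  have key : ∀ a : ℝ, ∫⁻ p : ℝ × ℝ, H (MeasurableEquiv.prodAssoc (p, a)) ≤
      (Ioi (0 : ℝ)).indicator (fun a => ENNReal.ofReal (128 * Real.pi) *
        ENNReal.ofReal (a⁻¹ * ((1 + |Real.log a|) ^ 2)⁻¹)) a := by
    intro a
    by_cases ha : 0 < a
    · rw [indicator_of_mem (show a ∈ Ioi (0 : ℝ) from ha)]
      refine le_trans (le_of_eq (lintegral_congr fun p => ?_)) (far_inner ha)
      simp [hH, MeasurableEquiv.prodAssoc, ha]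
    · rw [indicator_of_notMem (show a ∉ Ioi (0 : ℝ) from ha)]
      simp [hH, MeasurableEquiv.prodAssoc, ha]
  refine lt_of_le_of_lt (lintegral_mono key) ?_
  rw [lintegral_indicator measurableSet_Ioi, lintegral_const_mul' _ _ ENNReal.ofReal_ne_top]
  exact ENNReal.mul_lt_top ENNReal.ofReal_lt_top outer_finite

theorem integral_Gsup :
    ∀ K > (0 : ℝ), ∃ C > (0 : ℝ), ∀ r1 : ℝ, 0 < r1 → r1 ≤ K →
      ∫⁻ x in {x : G | 0 < x.2.2 ∧ r1 ≤ rG x}, Gsup r1 x ∂ρG ≤ ENNReal.ofReal (C / r1) := by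
  intro K hK
  set I1 := ∫⁻ x : G, ENNReal.ofReal (((1 + ‖x‖) ^ 4)⁻¹) with hI1
  set I2 := ∫⁻ x, ENNReal.ofReal (F2 x) ∂ρG with hI2
  have h1 : I1 ≠ ∞ := near_finite.ne
  have h2 : I2 ≠ ∞ := far_finite.ne
  have c1 := C1_pos K
  have c2 := C2_pos K
  have t1 : 0 ≤ I1.toReal := ENNReal.toReal_nonneg
  have t2 : 0 ≤ I2.toReal := ENNReal.toReal_nonneg
  refine ⟨C1 K * I1.toReal + C2 K * I2.toReal * K + 1, by positivity, fun r1 hr hrK => ?_⟩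
  have m1 := meas_F1 r1
  have m2 := meas_F2
  calc ∫⁻ x in {x : G | 0 < x.2.2 ∧ r1 ≤ rG x}, Gsup r1 x ∂ρG
      ≤ ∫⁻ x in {x : G | 0 < x.2.2 ∧ r1 ≤ rG x}, (ENNReal.ofReal (C1 K * F1 r1 x) +
          ENNReal.ofReal (C2 K * F2 x)) ∂ρG :=
        setLIntegral_mono (by fun_prop) fun x hx => Gsup_le hr hrK hx.1 hx.2
    _ ≤ ∫⁻ x, (ENNReal.ofReal (C1 K * F1 r1 x) + ENNReal.ofReal (C2 K * F2 x)) ∂ρG :=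
        setLIntegral_le_lintegral _ _
    _ = ENNReal.ofReal (C1 K) * ∫⁻ x, ENNReal.ofReal (F1 r1 x) ∂ρG +
          ENNReal.ofReal (C2 K) * I2 := by
        rw [lintegral_add_left (by fun_prop)]
        simp_rw [ENNReal.ofReal_mul c1.le, ENNReal.ofReal_mul c2.le]
        rw [lintegral_const_mul _ (by fun_prop), lintegral_const_mul _ (by fun_prop)]
    _ ≤ ENNReal.ofReal (C1 K) * (ENNReal.ofReal r1⁻¹ * I1) + ENNReal.ofReal (C2 K) * I2 := by
        gcongr
        exact near_bound hr
    _ = ENNReal.ofReal (C1 K * (r1⁻¹ * I1.toReal) + C2 K * I2.toReal) := by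
        rw [ENNReal.ofReal_add (by positivity) (by positivity), ENNReal.ofReal_mul c1.le,
          ENNReal.ofReal_mul c2.le, ENNReal.ofReal_mul (by positivity), ENNReal.ofReal_toReal h1,
          ENNReal.ofReal_toReal h2]
    _ ≤ _ := by
        refine ENNReal.ofReal_le_ofReal ?_
        rw [le_div_iff₀ hr]
        have : C2 K * I2.toReal * r1 ≤ C2 K * I2.toReal * K := by gcongr
        have e : C1 K * (r1⁻¹ * I1.toReal) * r1 = C1 K * I1.toReal := by field_simp
        linarith
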